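/- Let r ≥ 1 be an integer and m_1, …, m_r positive integers with s = m_1 + ⋯ + m_r. Then the multinomial coefficient s!/(m_1!⋯m_r!) equals the sum, over all ordered bipartitions (B_1, B_2) of {1, …, r} with 1 ∈ B_1 and B_2 = {1,…,r} \ B_1, of the product binom(s − r + 1, S(B_2) − |B_2|) · C(B_1) · C(B_2). -/

import Mathlib

/-!
Write `c i = m i - 1`, `c(T) = ∑ i ∈ T, c i`, and `z^(n)` for the rising factorial. After clearing
the factorials `(m i)!`, the theorem is `(m 1 + c(T))!` times the rising-factorial form of Hurwitz's
generalisation of Abel's binomial identity,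
`∑ A ⊆ T, x (x + c(A) + 1)^(|A| - 1) * (y + c(T \ A) + 1)^(|T \ A|) = (x + y + c(T) + 1)^(|T|)`,
at `x = m 1`, `y = 0` and `T = {2, …, r}`. The families `H T x = x (x + c(T) + 1)^(|T| - 1)` and
`H T x = (x + c(T) + 1)^(|T|)` both satisfy
`H T (x + 1) = H T x + ∑ i ∈ T, H (T \ {i}) (x + 1 + c i)`, so both sides of Hurwitz's identity
obey the same recursion in `x` and `T`; at `x = 0` only `A = ∅` contributes.
-/

section HurwitzIdentity

open Finset
open scoped Nat

variable {ι : Type*}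

theorem sum_sub_one {S : Finset ι} {m : ι → ℕ} (hm : ∀ i ∈ S, 0 < m i) :
    ∑ i ∈ S, (m i - 1) = ∑ i ∈ S, m i - #S := by
  rw [sum_tsub_distrib S hm, card_eq_sum_ones]

theorem ascFactorial_succ_left (n k : ℕ) :
    n.ascFactorial (k + 1) = n * (n + 1).ascFactorial k := by
  rw [Nat.ascFactorial_succ, Nat.succ_ascFactorial]

theorem succ_ascFactorial_succ (n k : ℕ) :
    (n + 1).ascFactorial (k + 1) =
      n.ascFactorial (k + 1) + (k + 1) * (n + 1).ascFactorial k := by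
  rw [Nat.ascFactorial_succ, ascFactorial_succ_left]
  ring

theorem factorial_mul_ascFactorial_card (c : ι → ℕ) (T : Finset ι) (y : ℕ) :
    (y + ∑ i ∈ T, c i)! * (y + ∑ i ∈ T, c i + 1).ascFactorial #T =
      (y + ∑ i ∈ T, (c i + 1))! := by
  rw [Nat.factorial_mul_ascFactorial, sum_add_distrib, ← card_eq_sum_ones, add_assoc]

/-- The rising-factorial analogue of the Abel–Hurwitz factor `x (x + ∑ i ∈ T, c i) ^ (|T| - 1)`.
It is the weight of `T` in Hurwitz's identity; the value at `T = ∅` is taken to be `1`, since there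
the exponent would be negative. -/
def abelRising (c : ι → ℕ) (T : Finset ι) (x : ℕ) : ℕ :=
  match #T with
  | 0 => 1
  | n + 1 => x * (x + ∑ i ∈ T, c i + 1).ascFactorial n

theorem abelRising_empty (c : ι → ℕ) (x : ℕ) : abelRising c ∅ x = 1 := rfl

theorem abelRising_of_card_eq_succ {T : Finset ι} {n : ℕ} (hT : #T = n + 1) (c : ι → ℕ) (x : ℕ) :
    abelRising c T x = x * (x + ∑ i ∈ T, c i + 1).ascFactorial n := by
  rw [abelRising, hT]

theorem abelRising_zero {T : Finset ι} (hT : T.Nonempty) (c : ι → ℕ) : abelRising c T 0 = 0 := by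
  obtain ⟨n, hn⟩ := Nat.exists_eq_succ_of_ne_zero hT.card_ne_zero
  rw [abelRising_of_card_eq_succ hn, zero_mul]

theorem factorial_mul_abelRising (c : ι → ℕ) (T : Finset ι) (x : ℕ) :
    (x + 1 + ∑ i ∈ T, c i)! * abelRising c T (x + 1) =
      (x + 1) * (x + ∑ i ∈ T, (c i + 1))! := by
  rcases hT : #T with _ | n
  · rw [card_eq_zero.mp hT]
    simp [abelRising_empty, Nat.factorial_succ]
  · rw [abelRising_of_card_eq_succ hT, mul_left_comm, Nat.factorial_mul_ascFactorial,
      sum_add_distrib, ← card_eq_sum_ones, hT]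
    congr 2
    ring

variable [DecidableEq ι]

theorem sum_powerset_filter_mem {M : Type*} [AddCommMonoid M] {T : Finset ι} {i : ι} (hi : i ∈ T)
    (f : Finset ι → M) :
    ∑ A ∈ T.powerset with i ∈ A, f A = ∑ A ∈ (T.erase i).powerset, f (insert i A) := by
  have hnot_mem : ∀ A ∈ (T.erase i).powerset, i ∉ A := fun A hA =>
    notMem_of_mem_powerset_of_notMem hA (notMem_erase i T)
  conv_lhs => rw [← insert_erase hi]
  rw [sum_filter, sum_powerset_insert (notMem_erase i T),
    sum_eq_zero fun A hA => if_neg (hnot_mem A hA), zero_add]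
  simp only [mem_insert_self, if_true]

theorem sdiff_insert_eq_erase_sdiff (T A : Finset ι) (i : ι) : T \ insert i A = T.erase i \ A := by
  rw [sdiff_insert, erase_sdiff_comm]

theorem sum_powerset_sum_erase {M : Type*} [AddCommMonoid M] (T : Finset ι)
    (f : ι → Finset ι → Finset ι → M) :
    ∑ A ∈ T.powerset, ∑ i ∈ A, f i (A.erase i) (T \ A) =
      ∑ i ∈ T, ∑ A ∈ (T.erase i).powerset, f i A (T.erase i \ A) := by
  calc ∑ A ∈ T.powerset, ∑ i ∈ A, f i (A.erase i) (T \ A)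
      = ∑ i ∈ T, ∑ A ∈ T.powerset with i ∈ A, f i (A.erase i) (T \ A) :=
        sum_comm' fun A i => by
          simp only [mem_powerset, mem_filter]
          exact ⟨fun h => ⟨h, h.1 h.2⟩, fun h => h.1⟩
    _ = ∑ i ∈ T, ∑ A ∈ (T.erase i).powerset, f i A (T.erase i \ A) :=
        sum_congr rfl fun i hi => by
          rw [sum_powerset_filter_mem hi]
          refine sum_congr rfl fun A hA => ?_
          have hiA : i ∉ A := notMem_of_mem_powerset_of_notMem hA (notMem_erase i T)
          rw [erase_insert hiA, sdiff_insert_eq_erase_sdiff]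

theorem ascFactorial_card_add_one (c : ι → ℕ) (T : Finset ι) (x : ℕ) :
    (x + 1 + ∑ i ∈ T, c i + 1).ascFactorial #T =
      (x + ∑ i ∈ T, c i + 1).ascFactorial #T +
        ∑ i ∈ T, (x + 1 + c i + ∑ j ∈ T.erase i, c j + 1).ascFactorial #(T.erase i) := by
  have hterm : ∀ i ∈ T, (x + 1 + c i + ∑ j ∈ T.erase i, c j + 1).ascFactorial #(T.erase i) =
      (x + 1 + ∑ j ∈ T, c j + 1).ascFactorial (#T - 1) := fun i hi => by
    rw [card_erase_of_mem hi, ← add_sum_erase T c hi, ← add_assoc]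
  rw [sum_congr rfl hterm, sum_const, smul_eq_mul]
  cases #T with
  | zero => simp
  | succ n => rw [add_right_comm x 1, succ_ascFactorial_succ, Nat.add_sub_cancel]

theorem abelRising_add_one (c : ι → ℕ) (T : Finset ι) (x : ℕ) :
    abelRising c T (x + 1) =
      abelRising c T x + ∑ i ∈ T, abelRising c (T.erase i) (x + 1 + c i) := by
  rcases hT : #T with _ | _ | n
  · rw [card_eq_zero.mp hT]
    simp [abelRising_empty]
  · obtain ⟨a, rfl⟩ := card_eq_one.mp hT
    simp [abelRising]
  · have hterm : ∀ i ∈ T, abelRising c (T.erase i) (x + 1 + c i) =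
        (x + 1 + c i) * (x + ∑ j ∈ T, c j + 1 + 1).ascFactorial n := fun i hi => by
      have hcard : #(T.erase i) = n + 1 := by rw [card_erase_of_mem hi, hT, Nat.add_sub_cancel]
      rw [abelRising_of_card_eq_succ hcard, ← add_sum_erase T c hi]
      congr 2
      ring
    rw [sum_congr rfl hterm, ← sum_mul, sum_add_distrib, sum_const, smul_eq_mul, hT,
      abelRising_of_card_eq_succ hT, abelRising_of_card_eq_succ hT, add_right_comm x 1,
      Nat.ascFactorial_succ, ascFactorial_succ_left]
    ring

theorem sum_powerset_abelRising_mul_ascFactorial (c : ι → ℕ) (T : Finset ι) (x y : ℕ) :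
    ∑ A ∈ T.powerset, abelRising c A x * (y + ∑ i ∈ T \ A, c i + 1).ascFactorial #(T \ A) =
      (x + y + ∑ i ∈ T, c i + 1).ascFactorial #T := by
  induction T using eraseInduction generalizing x with
  | H T ihT =>
    induction x with
    | zero =>
      rw [sum_eq_single_of_mem ∅ (empty_mem_powerset T) fun A _ hA => by
        rw [abelRising_zero (nonempty_iff_ne_empty.mpr hA), zero_mul]]
      simp [abelRising_empty]
    | succ x ihx =>
      rw [add_right_comm x 1 y, ascFactorial_card_add_one, ← ihx]
      simp only [abelRising_add_one, add_mul, sum_add_distrib, sum_mul]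
      rw [sum_powerset_sum_erase T fun i A B =>
        abelRising c A (x + 1 + c i) * (y + ∑ j ∈ B, c j + 1).ascFactorial #B]
      congr 1
      refine sum_congr rfl fun i hi => ?_
      rw [ihT i hi]
      congr 2
      ring

theorem sum_powerset_choose_mul_factorial_mul_factorial (c : ι → ℕ) (T : Finset ι) (x y : ℕ) :
    ∑ A ∈ T.powerset, (x + 1 + y + ∑ i ∈ T, c i).choose (y + ∑ i ∈ T \ A, c i) *
        ((x + 1) * (x + ∑ i ∈ A, (c i + 1))!) * (y + ∑ i ∈ T \ A, (c i + 1))! =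
      (x + 1 + y + ∑ i ∈ T, (c i + 1))! := by
  rw [← factorial_mul_ascFactorial_card, ← sum_powerset_abelRising_mul_ascFactorial, mul_sum]
  refine sum_congr rfl fun A hA => ?_
  have hsum : x + 1 + y + ∑ i ∈ T, c i =
      (x + 1 + ∑ i ∈ A, c i) + (y + ∑ i ∈ T \ A, c i) := by
    rw [← sum_sdiff (mem_powerset.mp hA)]
    ring
  rw [← factorial_mul_abelRising, ← factorial_mul_ascFactorial_card, hsum,
    ← Nat.add_choose_mul_factorial_mul_factorial (x + 1 + ∑ i ∈ A, c i)]
  ring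

theorem prod_factorial_mul_multinomial_mul_multinomial {T A : Finset ι} {a : ι} (ha : a ∉ T)
    (hA : A ⊆ T) (g : ι → ℕ) :
    ((g a)! * ∏ i ∈ T, (g i)!) * (Nat.multinomial (insert a A) g * Nat.multinomial (T \ A) g) =
      (g a + ∑ i ∈ A, g i)! * (∑ i ∈ T \ A, g i)! := by
  have haA : a ∉ A := fun h => ha (hA h)
  rw [← sum_insert haA, ← Nat.multinomial_spec, ← Nat.multinomial_spec, prod_insert haA,
    ← prod_sdiff hA]
  ring

theorem multinomial_insert_add_one_eq_sum {T : Finset ι} {a : ι} (ha : a ∉ T) {c g : ι → ℕ}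
    (hga : g a = c a) (hg : ∀ i ∈ T, g i = c i + 1) :
    Nat.multinomial (insert a T) (fun i => c i + 1) =
      ∑ A ∈ T.powerset, (∑ i ∈ insert a T, c i + 1).choose (∑ i ∈ T \ A, c i) *
        Nat.multinomial (insert a A) g * Nat.multinomial (T \ A) g := by
  have hsum : ∀ S ⊆ T, ∑ i ∈ S, (c i + 1) = ∑ i ∈ S, g i := fun S hS =>
    sum_congr rfl fun i hi => (hg i (hS hi)).symm
  have hprod : ∏ i ∈ insert a T, (c i + 1)! = (g a + 1) * ((g a)! * ∏ i ∈ T, (g i)!) := by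
    rw [prod_insert ha, ← hga, Nat.factorial_succ, mul_assoc,
      prod_congr rfl fun i hi => congrArg Nat.factorial (hg i hi).symm]
  have hfactorial := sum_powerset_choose_mul_factorial_mul_factorial c T (g a) 0
  simp only [add_zero, zero_add] at hfactorial
  have hprod_pos : 0 < ∏ i ∈ insert a T, (c i + 1)! := prod_pos fun i _ => Nat.factorial_pos _
  refine Nat.eq_of_mul_eq_mul_left hprod_pos ?_
  rw [Nat.multinomial_spec, sum_insert ha, sum_insert ha, ← hga, ← hfactorial, hprod, mul_sum]
  refine sum_congr rfl fun A hA => ?_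
  have hAT := mem_powerset.mp hA
  rw [hsum A hAT, hsum (T \ A) sdiff_subset, mul_assoc, mul_assoc (g a + 1),
    ← prod_factorial_mul_multinomial_mul_multinomial ha hAT, add_right_comm (g a) 1]
  ring

theorem multinomial_identity_one_general {I : Finset ι} {a : ι} (ha : a ∈ I) {m g : ι → ℕ}
    (hm : ∀ i ∈ I, 0 < m i) (hga : g a = m a - 1) (hg : ∀ i ∈ I, i ≠ a → g i = m i) :
    Nat.multinomial I m =
      ∑ B ∈ I.powerset with a ∈ B,
        (∑ i ∈ I, m i - #I + 1).choose (∑ i ∈ I \ B, g i - #(I \ B)) *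
          Nat.multinomial B g * Nat.multinomial (I \ B) g := by
  have hgm : ∀ i ∈ I.erase a, g i = m i := fun i hi =>
    hg i (mem_of_mem_erase hi) (ne_of_mem_erase hi)
  have hm_sub : ∀ i ∈ I, m i = m i - 1 + 1 := fun i hi => (Nat.sub_add_cancel (hm i hi)).symm
  have hinsert := multinomial_insert_add_one_eq_sum (notMem_erase a I) (c := fun i => m i - 1) hga
    fun i hi => (hgm i hi).trans (hm_sub i (mem_of_mem_erase hi))
  rw [insert_erase ha, sum_sub_one hm] at hinsert
  rw [Nat.multinomial_congr hm_sub, hinsert, sum_powerset_filter_mem ha]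
  refine sum_congr rfl fun A _ => ?_
  have hmem : ∀ i ∈ I.erase a \ A, i ∈ I.erase a := fun i hi => sdiff_subset hi
  rw [sdiff_insert_eq_erase_sdiff, sum_congr rfl fun i hi => hgm i (hmem i hi),
    sum_sub_one fun i hi => hm i (mem_of_mem_erase (hmem i hi))]

end HurwitzIdentity

/-- **Identity on multinomial coefficients (Theorem `thm:identity`).**
For `r ≥ 1` and positive integers `m 1, …, m r` with `s = m 1 + ⋯ + m r`,
setting `g 1 = m 1 - 1` and `g i = m i` for `2 ≤ i`, the multinomial coefficient
`s! / (m 1 ! ⋯ m r !)` equals the sum over all ordered bipartitions `(B₁, B₂)` of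
`{1, …, r}` with `1 ∈ B₁` and `B₂ = {1,…,r} \ B₁` of
`choose (s - r + 1) (S(B₂) - |B₂|) * C(B₁) * C(B₂)`, where `S(B) = ∑_{i∈B} g i`
and `C(B) = S(B)! / ∏_{i∈B} (g i)!`. -/
theorem multinomial_identity_one
    (r : ℕ) (hr : 1 ≤ r) (m : ℕ → ℕ) (hm : ∀ i ∈ Finset.Icc 1 r, 0 < m i)
    (s : ℕ) (hs : s = ∑ i ∈ Finset.Icc 1 r, m i)
    (g : ℕ → ℕ) (hg1 : g 1 = m 1 - 1) (hg2 : ∀ i, 2 ≤ i → g i = m i) :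
    s.factorial / ∏ i ∈ Finset.Icc 1 r, (m i).factorial =
      ∑ B1 ∈ (Finset.Icc 1 r).powerset.filter (fun B => 1 ∈ B),
        (s - r + 1).choose
            ((∑ i ∈ Finset.Icc 1 r \ B1, g i) - (Finset.Icc 1 r \ B1).card) *
          ((∑ i ∈ B1, g i).factorial / ∏ i ∈ B1, (g i).factorial) *
          ((∑ i ∈ Finset.Icc 1 r \ B1, g i).factorial /
            ∏ i ∈ Finset.Icc 1 r \ B1, (g i).factorial) := by
  subst hs
  simpa only [Nat.card_Icc, Nat.add_sub_cancel, Nat.multinomial] using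
    multinomial_identity_one_general (Finset.left_mem_Icc.mpr hr) hm hg1
      fun i hi hi1 => hg2 i (by have := (Finset.mem_Icc.mp hi).1; omega)
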